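/- Fix ε > 0 and b ≥ 5ε. For every integer j ≥ 1 there exists a constant c_j > 0 such that χ_{0,ε/3,b+ε}'(x) ≥ c_j · |χ_{0,ε,b}^{(j)}(x)| for all x ∈ ℝ, where χ^{(j)} denotes the j-th derivative. -/

import Mathlib

open MeasureTheory Set

/-- The rescaled mollifier `ρ_ε(x) = ε⁻¹ ρ(x/ε)`. -/
noncomputable def mollifier (ρ : ℝ → ℝ) (ε : ℝ) (x : ℝ) : ℝ := ε⁻¹ * ρ (x / ε)

/-- The piecewise linear ramp `ν_{ε,b}`. -/
noncomputable def nuFun (ε b : ℝ) (x : ℝ) : ℝ :=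
  if x ≤ 2 * ε then 0 else if x ≤ b - ε then (x - 2 * ε) / (b - 3 * ε) else 1

/-- The cut-off function `χ_{0,ε,b} = ρ_ε ∗ ν_{ε,b}`. -/
noncomputable def chi0 (ρ : ℝ → ℝ) (ε b : ℝ) (x : ℝ) : ℝ :=
  ∫ y : ℝ, mollifier ρ ε (x - y) * nuFun ε b y

/-!
The ramp `ν_{ε,b}` is Lipschitz and monotone, so `χ_{0,ε,b}' = ρ_ε ∗ ν_{ε,b}'`, where `ν_{ε,b}'` is
nonnegative, vanishes off `[2ε, b - ε]` and equals `(b - 3ε)⁻¹` on `(2ε, b - ε)`. Hence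
`χ_{0,ε,b}'` and all its derivatives vanish off `[ε, b]`, whereas `χ_{0,δ,B}'` is nonnegative
everywhere and equal to a positive constant on `[3δ, B - 2δ]`, an interval that contains `[ε, b]`
when `δ = ε / 3` and `B = b + ε`. On the compact set `[ε, b]` the quotient of a continuous function
by a positive one is bounded.
-/

open Function
open scoped Convolution NNReal Topology

lemma exists_pos_mul_norm_le_of_support_subset {X E : Type*} [TopologicalSpace X]
    [NormedAddCommGroup E] {K : Set X} (hK : IsCompact K) {f : X → E} {g : X → ℝ}
    (hf : ContinuousOn f K) (hfK : support f ⊆ K) (hg : ContinuousOn g K)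
    (hg0 : ∀ x, 0 ≤ g x) (hgK : ∀ x ∈ K, 0 < g x) :
    ∃ c : ℝ, 0 < c ∧ ∀ x, c * ‖f x‖ ≤ g x := by
  obtain ⟨C, hC⟩ := hK.exists_bound_of_continuousOn (hf.norm.div hg fun x hx => (hgK x hx).ne')
  refine ⟨(|C| + 1)⁻¹, by positivity, fun x => ?_⟩
  by_cases hx : x ∈ K
  · have hquot : ‖f x‖ / g x ≤ |C| + 1 :=
      calc ‖f x‖ / g x ≤ ‖‖f x‖ / g x‖ := le_abs_self _
        _ ≤ C := hC x hx
        _ ≤ |C| + 1 := by linarith [le_abs_self C]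
    rwa [inv_mul_le_iff₀ (by positivity), ← div_le_iff₀ (hgK x hx)]
  · simpa [notMem_support.1 fun h => hx (hfK h)] using hg0 x

lemma support_iteratedDeriv_subset_tsupport {𝕜 F : Type*} [NontriviallyNormedField 𝕜]
    [NormedAddCommGroup F] [NormedSpace 𝕜 F] (f : 𝕜 → F) (n : ℕ) :
    support (iteratedDeriv n f) ⊆ tsupport f := fun x hx =>
  support_iteratedFDeriv_subset (𝕜 := 𝕜) n fun h => hx (by simp [iteratedDeriv, h])

lemma locallyIntegrable_deriv_of_lipschitzWith {E : Type*} [NormedAddCommGroup E] [NormedSpace ℝ E]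
    [CompleteSpace E] {μ : Measure ℝ} [IsLocallyFiniteMeasure μ] {g : ℝ → E} {K : ℝ≥0}
    (hg : LipschitzWith K g) : LocallyIntegrable (deriv g) μ :=
  (locallyIntegrable_const (K : ℝ)).mono (aestronglyMeasurable_deriv g μ)
    (.of_forall fun _ => (norm_deriv_le_of_lipschitz hg).trans (Real.le_norm_self _))

lemma hasCompactSupport_of_support_subset_Ioo {α E : Type*} [TopologicalSpace α] [R1Space α]
    [Preorder α] [CompactIccSpace α] [Zero E] {f : α → E} {a b : α}
    (hf : support f ⊆ Ioo a b) : HasCompactSupport f :=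
  .of_support_subset_isCompact isCompact_Icc (hf.trans Ioo_subset_Icc_self)

/-- By Rademacher's theorem the difference quotients of `g` converge almost everywhere, and the
Lipschitz bound dominates them. -/
lemma hasDerivAt_convolution_of_lipschitzWith {E E' F : Type*}
    [NormedAddCommGroup E] [NormedSpace ℝ E]
    [NormedAddCommGroup E'] [NormedSpace ℝ E'] [FiniteDimensional ℝ E']
    [NormedAddCommGroup F] [NormedSpace ℝ F] (L : E →L[ℝ] E' →L[ℝ] F)
    {f : ℝ → E} {g : ℝ → E'} {K : ℝ≥0} {x : ℝ} (hf : Integrable f) (hg : LipschitzWith K g)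
    (hfg : ConvolutionExistsAt f g x L) :
    HasDerivAt (f ⋆[L] g) ((f ⋆[L] deriv g) x) x := by
  have hmeas {h : ℝ → E'} (hh : StronglyMeasurable h) (z : ℝ) :
      AEStronglyMeasurable (fun y => L (f y) (h (z - y))) :=
    hf.aestronglyMeasurable.convolution_integrand_snd' L hh.aestronglyMeasurable
  have hlip (y : ℝ) : LipschitzWith (Real.nnabs (‖L‖ * ‖f y‖ * K))
      (fun z => L (f y) (g (z - y))) := by
    refine LipschitzWith.of_dist_le_mul fun z w => ?_
    rw [dist_eq_norm, ← map_sub]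
    calc ‖L (f y) (g (z - y) - g (w - y))‖
        ≤ ‖L‖ * ‖f y‖ * ‖g (z - y) - g (w - y)‖ := L.le_opNorm₂ _ _
      _ ≤ ‖L‖ * ‖f y‖ * (K * dist z w) := by
        gcongr
        simpa [dist_eq_norm] using hg.dist_le_mul (z - y) (w - y)
      _ = Real.nnabs (‖L‖ * ‖f y‖ * K) * dist z w := by
        rw [Real.coe_nnabs, abs_of_nonneg (by positivity)]; ring
  have hdiff : ∀ᵐ y, HasDerivAt (fun z => L (f y) (g (z - y))) (L (f y) (deriv g (x - y))) x := by
    have hg' := (Measure.measurePreserving_sub_left volume x).quasiMeasurePreserving.ae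
      hg.ae_differentiableAt_real
    filter_upwards [hg'] with y hy
    exact (L (f y)).hasFDerivAt.comp_hasDerivAt x (hy.hasDerivAt.comp_sub_const x y)
  exact (hasDerivAt_integral_of_dominated_loc_of_lip Filter.univ_mem
    (.of_forall (hmeas hg.continuous.stronglyMeasurable)) hfg
    (hmeas (stronglyMeasurable_deriv g) x) (.of_forall fun y => (hlip y).lipschitzOnWith)
    ((hf.norm.const_mul ‖L‖).mul_const (K : ℝ)) hdiff).2

section Ramp

variable {δ B : ℝ}

lemma nuFun_eq_max_min (h : 3 * δ < B) (x : ℝ) :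
    nuFun δ B x = max 0 (min 1 ((x - 2 * δ) / (B - 3 * δ))) := by
  have hwidth : 0 < B - 3 * δ := by linarith
  unfold nuFun
  split_ifs with hleft hright
  · rw [max_eq_left]
    exact (min_le_right _ _).trans (div_nonpos_of_nonpos_of_nonneg (by linarith) hwidth.le)
  · rw [min_eq_right, max_eq_right]
    · exact div_nonneg (by linarith) hwidth.le
    · rw [div_le_one hwidth]; linarith
  · rw [min_eq_left, max_eq_right zero_le_one]
    rw [one_le_div hwidth]; linarith

lemma monotone_nuFun (h : 3 * δ < B) : Monotone (nuFun δ B) := by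
  intro x y hxy
  simp only [nuFun_eq_max_min h]
  exact max_le_max_left _ (min_le_min_left _
    (div_le_div_of_nonneg_right (sub_le_sub_right hxy _) (by linarith)))

lemma lipschitzWith_nuFun (h : 3 * δ < B) :
    LipschitzWith (B - 3 * δ)⁻¹.toNNReal (nuFun δ B) := by
  have hwidth : 0 < B - 3 * δ := by linarith
  have haffine : LipschitzWith (B - 3 * δ)⁻¹.toNNReal fun x => (x - 2 * δ) / (B - 3 * δ) := by
    refine LipschitzWith.of_dist_le_mul fun x y => le_of_eq ?_
    rw [Real.coe_toNNReal _ (by positivity), Real.dist_eq, Real.dist_eq, ← sub_div,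
      sub_sub_sub_cancel_right, abs_div, abs_of_pos hwidth, div_eq_inv_mul]
  simpa only [funext (nuFun_eq_max_min h)] using (haffine.const_min 1).const_max 0

lemma support_deriv_nuFun_subset (h : 3 * δ < B) :
    support (deriv (nuFun δ B)) ⊆ Icc (2 * δ) (B - δ) := by
  intro x hx
  refine ⟨not_lt.1 fun hleft => hx ?_, not_lt.1 fun hright => hx ?_⟩
  · have hzero : nuFun δ B =ᶠ[𝓝 x] fun _ => 0 := by
      filter_upwards [Iio_mem_nhds hleft] with y hy
      exact if_pos (mem_Iio.1 hy).le
    rw [hzero.deriv_eq, deriv_const]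
  · have hone : nuFun δ B =ᶠ[𝓝 x] fun _ => 1 := by
      filter_upwards [Ioi_mem_nhds hright] with y hy
      rw [mem_Ioi] at hy
      rw [nuFun, if_neg (by linarith), if_neg hy.not_ge]
    rw [hone.deriv_eq, deriv_const]

lemma deriv_nuFun_of_mem_Ioo {x : ℝ} (hx : x ∈ Ioo (2 * δ) (B - δ)) :
    deriv (nuFun δ B) x = (B - 3 * δ)⁻¹ := by
  have haffine : nuFun δ B =ᶠ[𝓝 x] fun y => (y - 2 * δ) / (B - 3 * δ) := by
    filter_upwards [Ioo_mem_nhds hx.1 hx.2] with y hy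
    rw [nuFun, if_neg hy.1.not_ge, if_pos hy.2.le]
  rw [haffine.deriv_eq, deriv_div_const, deriv_sub_const, deriv_id'', one_div]

end Ramp

section Mollifier

variable {ρ : ℝ → ℝ} {ε : ℝ}

lemma support_mollifier_subset (hρsupp : support ρ ⊆ Ioo (-1) 1) (hε : 0 < ε) :
    support (mollifier ρ ε) ⊆ Ioo (-ε) ε := by
  intro x hx
  have hmem := hρsupp (right_ne_zero_of_mul hx : ρ (x / ε) ≠ 0)
  rwa [mem_Ioo, lt_div_iff₀ hε, div_lt_iff₀ hε, neg_one_mul, one_mul] at hmem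

lemma hasCompactSupport_mollifier (hρsupp : support ρ ⊆ Ioo (-1) 1) (hε : 0 < ε) :
    HasCompactSupport (mollifier ρ ε) :=
  hasCompactSupport_of_support_subset_Ioo (support_mollifier_subset hρsupp hε)

lemma integrable_mollifier (hρ : Integrable ρ) (hε : 0 < ε) : Integrable (mollifier ρ ε) :=
  (hρ.comp_div hε.ne').const_mul _

lemma integral_mollifier (hε : 0 < ε) : ∫ x, mollifier ρ ε x = ∫ x, ρ x := by
  simp only [mollifier, integral_const_mul, Measure.integral_comp_div, abs_of_pos hε, smul_eq_mul,
    inv_mul_cancel_left₀ hε.ne']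

lemma contDiff_mollifier {n : WithTop ℕ∞} (hρ : ContDiff ℝ n ρ) : ContDiff ℝ n (mollifier ρ ε) :=
  contDiff_const.mul (hρ.comp (contDiff_id.div_const ε))

lemma mollifier_nonneg (hρ0 : ∀ x, 0 ≤ ρ x) (hε : 0 ≤ ε) (x : ℝ) : 0 ≤ mollifier ρ ε x :=
  mul_nonneg (inv_nonneg.2 hε) (hρ0 _)

end Mollifier

section Cutoff

variable {ρ : ℝ → ℝ} {ε b : ℝ}

lemma chi0_eq_convolution : chi0 ρ ε b = mollifier ρ ε ⋆ nuFun ε b :=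
  funext fun _ => (convolution_lsmul_swap (f := mollifier ρ ε) (g := nuFun ε b)).symm

lemma deriv_chi0 (hρ : Integrable ρ) (hρsupp : support ρ ⊆ Ioo (-1) 1) (hε : 0 < ε)
    (hb : 3 * ε < b) : deriv (chi0 ρ ε b) = mollifier ρ ε ⋆ deriv (nuFun ε b) := by
  have hint := integrable_mollifier hρ hε
  have hlip := lipschitzWith_nuFun hb
  rw [chi0_eq_convolution]
  exact funext fun x => (hasDerivAt_convolution_of_lipschitzWith _ hint hlip
    ((hasCompactSupport_mollifier hρsupp hε).convolutionExists_left_of_continuous_right _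
      hint.locallyIntegrable hlip.continuous x)).deriv

lemma deriv_chi0_nonneg (hρ : Integrable ρ) (hρ0 : ∀ x, 0 ≤ ρ x)
    (hρsupp : support ρ ⊆ Ioo (-1) 1) (hε : 0 < ε) (hb : 3 * ε < b) (x : ℝ) :
    0 ≤ deriv (chi0 ρ ε b) x := by
  rw [deriv_chi0 hρ hρsupp hε hb]
  exact integral_nonneg fun y =>
    mul_nonneg (mollifier_nonneg hρ0 hε.le y) (monotone_nuFun hb).deriv_nonneg

lemma deriv_chi0_of_mem_Icc (hρ : Integrable ρ) (hρsupp : support ρ ⊆ Ioo (-1) 1) (hε : 0 < ε)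
    {x : ℝ} (hx : x ∈ Icc (3 * ε) (b - 2 * ε)) :
    deriv (chi0 ρ ε b) x = (∫ y, ρ y) * (b - 3 * ε)⁻¹ := by
  have hb : 3 * ε < b := by linarith [hx.1, hx.2]
  have hslope : ∀ y ∈ Metric.ball x ε, deriv (nuFun ε b) y = (b - 3 * ε)⁻¹ := by
    intro y hy
    rw [Real.ball_eq_Ioo] at hy
    exact deriv_nuFun_of_mem_Ioo ⟨by linarith [hx.1, hy.1], by linarith [hx.2, hy.2]⟩
  have hball : support (mollifier ρ ε) ⊆ Metric.ball 0 ε := by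
    simpa [Real.ball_eq_Ioo] using support_mollifier_subset hρsupp hε
  have hcenter := hslope x (Metric.mem_ball_self hε)
  rw [deriv_chi0 hρ hρsupp hε hb,
    convolution_eq_right' _ hball fun y hy => (hslope y hy).trans hcenter.symm, hcenter]
  simp only [ContinuousLinearMap.lsmul_apply, smul_eq_mul, integral_mul_const,
    integral_mollifier hε]

lemma tsupport_deriv_chi0_subset (hρ : Integrable ρ) (hρsupp : support ρ ⊆ Ioo (-1) 1)
    (hε : 0 < ε) (hb : 3 * ε < b) : tsupport (deriv (chi0 ρ ε b)) ⊆ Icc ε b := by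
  refine closure_minimal ?_ isClosed_Icc
  rw [deriv_chi0 hρ hρsupp hε hb]
  refine (support_convolution_subset _).trans ((add_subset_add
    (support_mollifier_subset hρsupp hε) (support_deriv_nuFun_subset hb)).trans ?_)
  rintro _ ⟨s, hs, t, ht, rfl⟩
  exact ⟨by linarith [hs.1, ht.1], by linarith [hs.2, ht.2]⟩

lemma contDiff_deriv_chi0 {n : ℕ∞} (hρ : ContDiff ℝ n ρ) (hρsupp : support ρ ⊆ Ioo (-1) 1)
    (hε : 0 < ε) (hb : 3 * ε < b) : ContDiff ℝ n (deriv (chi0 ρ ε b)) := by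
  have hint : Integrable ρ :=
    hρ.continuous.integrable_of_hasCompactSupport (hasCompactSupport_of_support_subset_Ioo hρsupp)
  rw [deriv_chi0 hint hρsupp hε hb]
  exact (hasCompactSupport_mollifier hρsupp hε).contDiff_convolution_left _
    (contDiff_mollifier hρ) (locallyIntegrable_deriv_of_lipschitzWith (lipschitzWith_nuFun hb))

end Cutoff

theorem statement1_general {ρ η : ℝ → ℝ} {k : ℕ} (hρ : ContDiff ℝ k ρ)
    (hρsupp : support ρ ⊆ Ioo (-1) 1) (hη0 : ∀ x, 0 ≤ η x) (hηsupp : support η ⊆ Ioo (-1) 1)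
    (hηint : 0 < ∫ x, η x) {ε b δ B : ℝ} (hδ : 0 < δ) (hb : 3 * ε < b)
    (hδε : 3 * δ ≤ ε) (hbB : b ≤ B - 2 * δ) :
    ∃ c : ℝ, 0 < c ∧ ∀ x : ℝ,
      c * |iteratedDeriv (k + 1) (chi0 ρ ε b) x| ≤ deriv (chi0 η δ B) x := by
  have hε : 0 < ε := by linarith
  have hB : 3 * δ < B := by linarith
  have hρi : Integrable ρ :=
    hρ.continuous.integrable_of_hasCompactSupport (hasCompactSupport_of_support_subset_Ioo hρsupp)
  have hηi : Integrable η := .of_integral_ne_zero hηint.ne'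
  have hsupp : support (iteratedDeriv k (deriv (chi0 ρ ε b))) ⊆ Icc ε b :=
    (support_iteratedDeriv_subset_tsupport _ k).trans
      (tsupport_deriv_chi0_subset hρi hρsupp hε hb)
  have hcont : Continuous (iteratedDeriv k (deriv (chi0 ρ ε b))) :=
    (contDiff_deriv_chi0 (n := k) hρ hρsupp hε hb).continuous_iteratedDeriv' k
  have hval : ∀ x ∈ Icc ε b, deriv (chi0 η δ B) x = (∫ y, η y) * (B - 3 * δ)⁻¹ :=
    fun x hx => deriv_chi0_of_mem_Icc hηi hηsupp hδ (Icc_subset_Icc hδε hbB hx)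
  have hpos : 0 < (∫ y, η y) * (B - 3 * δ)⁻¹ := mul_pos hηint (inv_pos.2 (by linarith))
  rw [iteratedDeriv_succ']
  exact exists_pos_mul_norm_le_of_support_subset isCompact_Icc hcont.continuousOn hsupp
    (continuousOn_const.congr hval) (deriv_chi0_nonneg hηi hη0 hηsupp hδ hB)
    fun x hx => (hval x hx).symm ▸ hpos

theorem statement1 (ρ : ℝ → ℝ) (hρs : ContDiff ℝ (⊤ : ℕ∞) ρ) (hρc : HasCompactSupport ρ)
    (hρ0 : ∀ x, 0 ≤ ρ x) (hρe : ∀ x, ρ (-x) = ρ x)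
    (hρsupp : Function.support ρ ⊆ Set.Ioo (-1) 1) (hρint : ∫ x : ℝ, ρ x = 1)
    (ε b : ℝ) (hε : 0 < ε) (hb : 5 * ε ≤ b) :
    ∀ j : ℕ, 1 ≤ j → ∃ c : ℝ, 0 < c ∧ ∀ x : ℝ,
      c * |iteratedDeriv j (chi0 ρ ε b) x| ≤ deriv (chi0 ρ (ε / 3) (b + ε)) x := by
  rintro (_ | k) hj
  · omega
  · exact statement1_general (hρs.of_le (by exact_mod_cast le_top)) hρsupp hρ0 hρsupp
      (hρint ▸ one_pos) (by positivity) (by linarith) (by linarith) (by linarith)
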